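/- Let m ≥ 0 be an integer and let y : ℕ → ℤ be a walk of length m. Then for every j ∈ ℤ: U_j − D_j = 1 if 0 ≤ j < y(m); U_j − D_j = −1 if y(m) ≤ j < 0; and U_j − D_j = 0 otherwise. -/

import Mathlib

/-- Number of upcrossings of the edge `(j, j+1)` by the walk `y` within the first `m` steps. -/
def upcrossings (m : ℕ) (y : ℕ → ℤ) (j : ℤ) : ℕ :=
  ((Finset.range m).filter fun k => y k = j ∧ y (k + 1) = j + 1).card

/-- Number of downcrossings of the edge `(j, j+1)` by the walk `y` within the first `m` steps. -/
def downcrossings (m : ℕ) (y : ℕ → ℤ) (j : ℤ) : ℕ :=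
  ((Finset.range m).filter fun k => y k = j + 1 ∧ y (k + 1) = j).card

/-! A step of size at most one changes the indicator of `{x | j < x}` exactly when it crosses the
edge `(j, j + 1)`: by `+1` on an upcrossing and by `-1` on a downcrossing. Summing over the steps
telescopes, so `U_j - D_j` depends only on the sides of the edge on which the walk starts and
ends. -/

theorem ite_upcrossing_sub_ite_downcrossing {a b : ℤ} (hab : |b - a| ≤ 1) (j : ℤ) :
    ((if a = j ∧ b = j + 1 then 1 else 0) - (if a = j + 1 ∧ b = j then 1 else 0) : ℤ) =
      (if j < b then 1 else 0) - (if j < a then 1 else 0) := by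
  have := abs_le.mp hab
  split_ifs <;> omega

theorem upcrossings_sub_downcrossings_general (m : ℕ) (y : ℕ → ℤ)
    (hy : ∀ k < m, |y (k + 1) - y k| ≤ 1) (j : ℤ) :
    (upcrossings m y j : ℤ) - (downcrossings m y j : ℤ) =
      (if j < y m then 1 else 0) - (if j < y 0 then 1 else 0) := by
  calc (upcrossings m y j : ℤ) - (downcrossings m y j : ℤ)
      = ∑ k ∈ Finset.range m, ((if y k = j ∧ y (k + 1) = j + 1 then 1 else 0) -
          (if y k = j + 1 ∧ y (k + 1) = j then 1 else 0)) := by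
        simp only [upcrossings, downcrossings, Finset.natCast_card_filter,
          Finset.sum_sub_distrib]
    _ = ∑ k ∈ Finset.range m,
          ((if j < y (k + 1) then 1 else 0) - (if j < y k then 1 else 0)) :=
        Finset.sum_congr rfl fun k hk =>
          ite_upcrossing_sub_ite_downcrossing (hy k (Finset.mem_range.mp hk)) j
    _ = (if j < y m then 1 else 0) - (if j < y 0 then 1 else 0) :=
        Finset.sum_range_sub (fun k => if j < y k then 1 else 0) m

/-- Let `m ≥ 0` be an integer and `y : ℕ → ℤ` a walk of length `m`
(`y 0 = 0`, `|y(k+1) - y(k)| = 1`). Then for every `j ∈ ℤ`: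
`U_j - D_j = 1` if `0 ≤ j < y(m)`; `U_j - D_j = -1` if `y(m) ≤ j < 0`;
and `U_j - D_j = 0` otherwise. -/
theorem upcrossings_sub_downcrossings (m : ℕ) (y : ℕ → ℤ) (hy0 : y 0 = 0)
    (hy : ∀ k, |y (k + 1) - y k| = 1) (j : ℤ) :
    (upcrossings m y j : ℤ) - (downcrossings m y j : ℤ) =
      if 0 ≤ j ∧ j < y m then 1 else if y m ≤ j ∧ j < 0 then -1 else 0 := by
  rw [upcrossings_sub_downcrossings_general m y (fun k _ => (hy k).le), hy0]
  split_ifs <;> omega
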